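/- Let 𝕏 be a σ-finite measure space and ℳ, 𝒩 Banach L^0(𝕏)-modules. A tensor α = Σ_{i=1}^n v_i ⊗ w_i ∈ ℳ ⊗ 𝒩 is zero if and only if Σ_{i=1}^n ω(v_i)η(w_i) = 0 in L^0(𝕏) for every ω ∈ ℳ* and η ∈ 𝒩*. -/

import Mathlib

/-!
Let `v i ∈ ℳ`, `w i ∈ 𝒩` be such that `∑ i, ω (v i) * η (w i) = 0` for all bounded functionals.

The main tool is a Hahn–Banach theorem for `L⁰(𝕏)`-modules (`exists_norming`): every `u` admits a
functional `ω` with `|ω x| ≤ |x|` and `ω u = |u|`. It is proved by Zorn's lemma applied to graphs,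
that is, submodules of `ℳ × L⁰(𝕏)` whose elements satisfy `|y| ≤ |x|`; the one-step extension
uses that `L⁰(𝕏)` is Dedekind complete (`exists_isLUB`) and that each `f` has a pointwise inverse
on `{f ≠ 0}`. After division by `|u|` one gets a bounded `ω` with `ω u • u = u`
(`exists_dual_smul_self`), so bounded functionals separate points.

By induction on the number of generators this yields bounded functionals `η j` on `𝒩` with
`w i = ∑ j, η j (w i) • w j` for all `i` (`exists_dual_family`). Hence
`∑ i, v i ⊗ w i = ∑ j, (∑ i, η j (w i) • v i) ⊗ w j`, and each coefficient
`∑ i, η j (w i) • v i` vanishes because every bounded functional `ω` on `ℳ` kills it.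
-/

open MeasureTheory Filter Set TensorProduct

noncomputable section

namespace Paper

variable {X : Type*} [MeasurableSpace X]

/-- The space `L⁰(𝕏)` of real-valued measurable functions up to `μ`-a.e. equality. -/
abbrev L0 (μ : Measure X) : Type _ := X →ₘ[μ] ℝ

instance (μ : Measure X) : CommRing (L0 μ) :=
  { (inferInstance : AddCommGroup (L0 μ)), (inferInstance : CommMonoid (L0 μ)) with
    left_distrib := fun a b c => AEEqFun.toGerm_injective <| by
      simp only [AEEqFun.mul_toGerm, AEEqFun.add_toGerm, mul_add]
    right_distrib := fun a b c => AEEqFun.toGerm_injective <| by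
      simp only [AEEqFun.mul_toGerm, AEEqFun.add_toGerm, add_mul]
    zero_mul := fun a => AEEqFun.toGerm_injective <| by
      simp only [AEEqFun.mul_toGerm, AEEqFun.zero_toGerm, zero_mul]
    mul_zero := fun a => AEEqFun.toGerm_injective <| by
      simp only [AEEqFun.mul_toGerm, AEEqFun.zero_toGerm, mul_zero] }

/-- The distance on `L⁰(𝕏)` inducing the topology of convergence in measure, defined through
the auxiliary finite measure `μ.toFinite` (which satisfies `μ ≪ μ.toFinite ≪ μ`). -/
noncomputable def dL0 (μ : Measure X) [SFinite μ] (f g : L0 μ) : ℝ :=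
  ∫ x, min |f x - g x| 1 ∂(μ.toFinite)

/-- A Banach `L⁰(𝕏)`-module: a module over `L⁰(𝕏)` endowed with a pointwise norm, complete
with respect to the induced distance. -/
class BanachMod (μ : Measure X) [SFinite μ] (M : Type*) [AddCommGroup M]
    [Module (L0 μ) M] where
  pn : M → L0 μ
  pn_nonneg : ∀ v : M, 0 ≤ pn v
  pn_eq_zero : ∀ v : M, pn v = 0 ↔ v = 0
  pn_add_le : ∀ v w : M, pn (v + w) ≤ pn v + pn w
  pn_smul : ∀ (f : L0 μ) (v : M), pn (f • v) = |f| * pn v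
  complete : ∀ u : ℕ → M,
    (∀ ε : ℝ, 0 < ε → ∃ N : ℕ, ∀ m ≥ N, ∀ n ≥ N, dL0 μ (pn (u m - u n)) 0 < ε) →
    ∃ v : M, Tendsto (fun n => dL0 μ (pn (u n - v)) 0) atTop (nhds 0)

/-- The pointwise norm of a Banach `L⁰(𝕏)`-module, with the measure explicit. -/
noncomputable def pn (μ : Measure X) [SFinite μ] {M : Type*} [AddCommGroup M]
    [Module (L0 μ) M] [BanachMod μ M] (v : M) : L0 μ :=
  BanachMod.pn v

/-- The distance on a Banach `L⁰(𝕏)`-module. -/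
noncomputable def dM (μ : Measure X) [SFinite μ] {M : Type*} [AddCommGroup M]
    [Module (L0 μ) M] [BanachMod μ M] (v w : M) : ℝ :=
  dL0 μ (pn μ (v - w)) 0

section Defs

variable (μ : Measure X) [SFinite μ]
variable {M N : Type*} [AddCommGroup M] [Module (L0 μ) M] [BanachMod μ M]
  [AddCommGroup N] [Module (L0 μ) N] [BanachMod μ N]

/-- The set of admissible bounds of a map between Banach `L⁰(𝕏)`-modules; the pointwise norm
`|T|` of a homomorphism is the infimum of this set. -/
def homBddSet (T : M → N) : Set (L0 μ) :=
  {g | 0 ≤ g ∧ ∀ v, pn μ (T v) ≤ g * pn μ v}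

/-- A homomorphism of Banach `L⁰(𝕏)`-modules: an `L⁰(𝕏)`-linear map admitting a bound
`g ∈ L⁰(𝕏)⁺` with `|T v| ≤ g |v|` (equivalently, `L⁰(𝕏)`-linear and continuous). -/
def IsHom (T : M →ₗ[L0 μ] N) : Prop :=
  ∃ g, g ∈ homBddSet μ (⇑T)

/-- The set of admissible bounds of an `L⁰(𝕏)`-valued map (for elements of the dual module). -/
def dualBddSet (ω : M → L0 μ) : Set (L0 μ) :=
  {g | 0 ≤ g ∧ ∀ v, |ω v| ≤ g * pn μ v}

/-- Membership in the dual module `ℳ*`: an `L⁰(𝕏)`-linear map `ω : ℳ → L⁰(𝕏)` admitting a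
bound `g ∈ L⁰(𝕏)⁺` with `|ω v| ≤ g |v|`. -/
def IsDual (ω : M →ₗ[L0 μ] L0 μ) : Prop :=
  ∃ g, g ∈ dualBddSet μ (⇑ω)

/-- Membership in the unit disc `𝔻_{ℳ*}` of the dual module: `|ω| ≤ 1`, equivalently
`|ω v| ≤ |v|` for every `v`. -/
def InDualDisc (ω : M →ₗ[L0 μ] L0 μ) : Prop :=
  ∀ v, |ω v| ≤ pn μ v

/-- The family of pointwise norms `|s - ∑_{i ∈ F ∪ G} v i|` for `G` finite disjoint from `F`,
whose `F`-indexed inf-sup being `0` defines `s = ∑_{i∈I} v i`. -/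
def sumUB {I : Type*} (v : I → M) (s : M) (F : Finset I) : Set (L0 μ) :=
  {g | ∃ G : Finset I, Disjoint G F ∧ g = pn μ (s - (∑ i ∈ F, v i + ∑ i ∈ G, v i))}

/-- `HasSumMod μ v s` means that the family `{v_i}` is summable in the Banach `L⁰(𝕏)`-module
with sum `s`, i.e. `⋀_F ⋁_G |s - ∑_{i ∈ F ∪ G} v_i| = 0` (the inner suprema being the values
of `b`, and the outer infimum being `0`). -/
def HasSumMod {I : Type*} (v : I → M) (s : M) : Prop :=
  ∃ b : Finset I → L0 μ, (∀ F, IsLUB (sumUB μ v s F) (b F)) ∧ IsGLB (Set.range b) 0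

/-- A family in a Banach `L⁰(𝕏)`-module is summable if it has a sum. -/
def SummableMod {I : Type*} (v : I → M) : Prop :=
  ∃ s, HasSumMod μ v s

/-- The partial sums `∑_{i ∈ F} |v i|` of the pointwise norms of a family; the element `|v|₁`
of `ℓ₁(I, ℳ)` is the supremum of this set. -/
def l1PartialSums {I : Type*} (v : I → M) : Set (L0 μ) :=
  {g | ∃ F : Finset I, g = ∑ i ∈ F, pn μ (v i)}

/-- Membership in `ℓ₁(I, ℳ)`: the partial sums of the pointwise norms admit a supremum
(equivalently, an upper bound) in `L⁰(𝕏)`. -/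
def Meml1 {I : Type*} (v : I → M) : Prop :=
  ∃ b, IsLUB (l1PartialSums μ v) b

/-- The partial sums `∑_{i ∈ F} |v i|` for an `L⁰(𝕏)`-valued family. -/
def l1PartialSumsF {I : Type*} (v : I → L0 μ) : Set (L0 μ) :=
  {g | ∃ F : Finset I, g = ∑ i ∈ F, |v i|}

/-- Membership in `ℓ₁(I, L⁰(𝕏))`. -/
def Meml1F {I : Type*} (v : I → L0 μ) : Prop :=
  ∃ b, IsLUB (l1PartialSumsF μ v) b

/-- The set whose infimum defines the projective pointwise norm: all values
`∑_{i=1}^n |v_i||w_i|` over representations `α = ∑_{i=1}^n v_i ⊗ w_i`. -/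
def piReps (α : M ⊗[L0 μ] N) : Set (L0 μ) :=
  {g | ∃ (n : ℕ) (v : Fin n → M) (w : Fin n → N),
    α = ∑ i, v i ⊗ₜ[L0 μ] w i ∧ g = ∑ i, pn μ (v i) * pn μ (w i)}

/-- The set whose supremum defines the injective pointwise norm: all values
`|∑_{i=1}^n ω(v_i) η(w_i)|` over representations `α = ∑_{i=1}^n v_i ⊗ w_i` and elements
`ω ∈ 𝔻_{ℳ*}`, `η ∈ 𝔻_{𝒩*}`. -/
def epsReps (α : M ⊗[L0 μ] N) : Set (L0 μ) :=
  {g | ∃ (n : ℕ) (v : Fin n → M) (w : Fin n → N)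
    (ω : M →ₗ[L0 μ] L0 μ) (η : N →ₗ[L0 μ] L0 μ), InDualDisc μ ω ∧ InDualDisc μ η ∧
    α = ∑ i, v i ⊗ₜ[L0 μ] w i ∧ g = |∑ i, ω (v i) * η (w i)|}

/-- `IsPiTensor μ M N P e` states that the Banach `L⁰(𝕏)`-module `P`, together with the
`L⁰(𝕏)`-linear map `e` defined on the algebraic tensor product, realizes the projective
tensor product `ℳ ⊗̂_π 𝒩`: the pointwise norm of `e α` is the projective pointwise norm
`|α|_π` and the image of `e` is dense. -/
structure IsPiTensor (M N P : Type*) [AddCommGroup M] [Module (L0 μ) M] [BanachMod μ M]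
    [AddCommGroup N] [Module (L0 μ) N] [BanachMod μ N]
    [AddCommGroup P] [Module (L0 μ) P] [BanachMod μ P]
    (e : M ⊗[L0 μ] N →ₗ[L0 μ] P) : Prop where
  pn_emb : ∀ α : M ⊗[L0 μ] N, IsGLB (piReps μ α) (pn μ (e α))
  dense : ∀ p : P, ∀ ε : ℝ, 0 < ε → ∃ α : M ⊗[L0 μ] N, dM μ (e α) p < ε

/-- `IsEpsTensor μ M N P e` states that the Banach `L⁰(𝕏)`-module `P`, together with the
`L⁰(𝕏)`-linear map `e` defined on the algebraic tensor product, realizes the injective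
tensor product `ℳ ⊗̂_ε 𝒩`: the pointwise norm of `e α` is the injective pointwise norm
`|α|_ε` and the image of `e` is dense. -/
structure IsEpsTensor (M N P : Type*) [AddCommGroup M] [Module (L0 μ) M] [BanachMod μ M]
    [AddCommGroup N] [Module (L0 μ) N] [BanachMod μ N]
    [AddCommGroup P] [Module (L0 μ) P] [BanachMod μ P]
    (e : M ⊗[L0 μ] N →ₗ[L0 μ] P) : Prop where
  pn_emb : ∀ α : M ⊗[L0 μ] N, IsLUB (epsReps μ α) (pn μ (e α))
  dense : ∀ p : P, ∀ ε : ℝ, 0 < ε → ∃ α : M ⊗[L0 μ] N, dM μ (e α) p < ε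

end Defs

/-! ### Pointwise operations and Dedekind completeness of `L⁰(𝕏)` -/

section Order

variable {μ : Measure X}

theorem coe_zero : ⇑(0 : L0 μ) =ᵐ[μ] fun _ => 0 := AEEqFun.coeFn_zero
theorem coe_one : ⇑(1 : L0 μ) =ᵐ[μ] fun _ => 1 := AEEqFun.coeFn_one
theorem coe_add (f g : L0 μ) : ⇑(f + g) =ᵐ[μ] fun x => f x + g x := AEEqFun.coeFn_add f g
theorem coe_sub (f g : L0 μ) : ⇑(f - g) =ᵐ[μ] fun x => f x - g x := AEEqFun.coeFn_sub f g
theorem coe_neg (f : L0 μ) : ⇑(-f) =ᵐ[μ] fun x => -f x := AEEqFun.coeFn_neg f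
theorem coe_mul (f g : L0 μ) : ⇑(f * g) =ᵐ[μ] fun x => f x * g x := AEEqFun.coeFn_mul f g
theorem coe_abs (f : L0 μ) : ⇑|f| =ᵐ[μ] fun x => |f x| := AEEqFun.coeFn_abs f

/-- The pointwise inverse of `f ∈ L⁰(𝕏)`, equal to `0` where `f` vanishes: `L⁰(𝕏)` is a
von Neumann regular ring. -/
def pinv (f : L0 μ) : L0 μ := AEEqFun.compMeasurable (fun t : ℝ => t⁻¹) measurable_inv f

theorem coe_pinv (f : L0 μ) : ⇑(pinv f) =ᵐ[μ] fun x => (f x)⁻¹ :=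
  AEEqFun.coeFn_compMeasurable _ _ f

/-- Dedekind completeness of `L⁰(𝕏)`. Fix the bounded functional `I f = ∫ arctan f` and let `f n`
be a sequence of finite suprema of elements of `S` that maximizes `I`; the pointwise supremum of
this sequence dominates each element of `S`, as otherwise `I` could be increased further. -/
theorem exists_isLUB [SFinite μ] {S : Set (L0 μ)} (hS : S.Nonempty) (hb : BddAbove S) :
    ∃ c, IsLUB S c := by
  obtain ⟨b, hb⟩ := hb
  let ν := μ.toFinite
  have hae : ae ν = ae μ := ae_toFinite
  let I : L0 μ → ℝ := fun f => ∫ x, Real.arctan (f x) ∂ν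
  have hint : ∀ f : X → ℝ, Measurable f → Integrable (fun x => Real.arctan (f x)) ν := by
    intro f hf
    refine Integrable.of_bound (C := Real.pi / 2)
      (Real.measurable_arctan.comp hf).aestronglyMeasurable (Eventually.of_forall fun x => ?_)
    rw [Real.norm_eq_abs, abs_le]
    exact ⟨(Real.neg_pi_div_two_lt_arctan _).le, (Real.arctan_lt_pi_div_two _).le⟩
  have hmeas : ∀ f : L0 μ, Measurable f := fun f => f.stronglyMeasurable.measurable
  have hbd : BddAbove (I '' supClosure S) := by
    refine ⟨∫ _, Real.pi / 2 ∂ν, ?_⟩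
    rintro _ ⟨f, -, rfl⟩
    exact integral_mono (hint _ (hmeas f)) (integrable_const _)
      fun x => (Real.arctan_lt_pi_div_two _).le
  have hne : (I '' supClosure S).Nonempty := (hS.mono subset_supClosure).image I
  have hseq : ∀ n : ℕ, ∃ f ∈ supClosure S, sSup (I '' supClosure S) - 1 / ((n : ℝ) + 1) < I f := by
    intro n
    have hpos : (0 : ℝ) < 1 / ((n : ℝ) + 1) := by positivity
    obtain ⟨_, ⟨f, hf, rfl⟩, h⟩ := exists_lt_of_lt_csSup hne
      (sub_lt_self (sSup (I '' supClosure S)) hpos)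
    exact ⟨f, hf, h⟩
  choose f hfS hf using hseq
  have hfb : ∀ c ∈ upperBounds S, ∀ n, f n ≤ c := by
    intro c hc n
    rw [← upperBounds_supClosure] at hc
    exact hc (hfS n)
  have hgm : Measurable fun x => ⨆ n, f n x := Measurable.iSup fun n => hmeas (f n)
  let g : L0 μ := AEEqFun.mk (fun x => ⨆ n, f n x) hgm.aestronglyMeasurable
  have hg : ⇑g =ᵐ[μ] fun x => ⨆ n, f n x := AEEqFun.coeFn_mk _ _
  have hbx : ∀ᵐ x ∂μ, ∀ n, f n x ≤ b x :=
    ae_all_iff.2 fun n => AEEqFun.coeFn_le.2 (hfb b hb n)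
  refine ⟨g, ?_, ?_⟩
  · intro h hh
    have hfg : ∀ᵐ x ∂μ, ∀ n, f n x ≤ g x := by
      filter_upwards [hg, hbx] with x h1 h2 n
      rw [h1]
      exact le_ciSup (f := fun n => f n x) ⟨b x, by rintro _ ⟨k, rfl⟩; exact h2 k⟩ n
    let k : X → ℝ := fun x => Real.arctan (h x ⊔ g x) - Real.arctan (g x)
    have hk0 : ∀ x, 0 ≤ k x := fun x =>
      sub_nonneg.2 (Real.arctan_strictMono.monotone le_sup_right)
    have hki : Integrable k ν := (hint _ ((hmeas h).sup (hmeas g))).sub (hint _ (hmeas g))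
    have hkn : ∀ n : ℕ, ∫ x, k x ∂ν ≤ 1 / ((n : ℝ) + 1) := by
      intro n
      have hmem : h ⊔ f n ∈ supClosure S := supClosed_supClosure (subset_supClosure hh) (hfS n)
      have h1 : I (h ⊔ f n) ≤ sSup (I '' supClosure S) := le_csSup hbd ⟨_, hmem, rfl⟩
      have h2 : ∫ x, k x ∂ν ≤ ∫ x, (Real.arctan ((h ⊔ f n : L0 μ) x) - Real.arctan (f n x)) ∂ν := by
        refine integral_mono_ae hki ((hint _ (hmeas _)).sub (hint _ (hmeas _))) ?_
        rw [hae]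
        filter_upwards [hfg, AEEqFun.coeFn_sup h (f n)] with x h3 h4
        rw [h4]
        have h5 := h3 n
        have h6 := Real.arctan_strictMono.monotone h5
        rcases le_total (h x) (g x) with h7 | h7
        · have := Real.arctan_strictMono.monotone (le_sup_right : f n x ≤ h x ⊔ f n x)
          simp only [k, sup_eq_right.2 h7]
          linarith
        · simp only [k, sup_eq_left.2 h7, sup_eq_left.2 (h5.trans h7)]
          linarith
      rw [integral_sub (hint _ (hmeas _)) (hint _ (hmeas _))] at h2
      have h3 := hf n
      simp only [I] at h1 h3
      linarith
    have hk : ∫ x, k x ∂ν = 0 := by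
      refine le_antisymm ?_ (integral_nonneg hk0)
      exact ge_of_tendsto' tendsto_one_div_add_atTop_nhds_zero_nat hkn
    rw [integral_eq_zero_iff_of_nonneg hk0 hki, hae] at hk
    refine AEEqFun.coeFn_le.1 ?_
    filter_upwards [hk] with x hx
    have : h x ⊔ g x = g x := Real.arctan_injective (sub_eq_zero.1 hx)
    exact sup_eq_right.1 this
  · intro c hc
    have hcx : ∀ᵐ x ∂μ, ∀ n, f n x ≤ c x :=
      ae_all_iff.2 fun n => AEEqFun.coeFn_le.2 (hfb c hc n)
    refine AEEqFun.coeFn_le.1 ?_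
    filter_upwards [hg, hcx] with x h1 h2
    rw [h1]
    exact ciSup_le h2

end Order

/-! ### The Hahn–Banach theorem -/

section HahnBanach

variable {μ : Measure X} [SFinite μ] {M : Type*} [AddCommGroup M] [Module (L0 μ) M]
  [BanachMod μ M]

theorem pn_neg (x : M) : pn μ (-x) = pn μ x := by
  have h := BanachMod.pn_smul (μ := μ) (-1) x
  rw [neg_one_smul] at h
  refine h.trans (AEEqFun.ext ?_)
  filter_upwards [coe_mul |(-1 : L0 μ)| (BanachMod.pn x), coe_abs (-1 : L0 μ), coe_neg (1 : L0 μ),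
    coe_one (μ := μ)] with t h1 h2 h3 h4
  rw [h1, h2, h3, h4]
  simp [pn]

/-- A submodule of `ℳ × L⁰(𝕏)` all of whose elements `(x, y)` satisfy `|y| ≤ |x|`. Such a submodule
is the graph of a functional of pointwise norm at most `1` on a submodule of `ℳ`. -/
def IsDominated (G : Submodule (L0 μ) (M × L0 μ)) : Prop :=
  ∀ z ∈ G, |z.2| ≤ pn μ z.1

/-- The value `c` of an extension at `x` must satisfy `|y + c| ≤ |s + x|` on the graph; such a `c`
exists by Dedekind completeness. -/
theorem exists_value {G : Submodule (L0 μ) (M × L0 μ)} (hG : IsDominated G) (x : M) :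
    ∃ c : L0 μ, ∀ z ∈ G, |z.2 + c| ≤ pn μ (z.1 + x) := by
  let S : Set (L0 μ) := (fun z : M × L0 μ => -pn μ (z.1 + x) - z.2) '' G
  have key : ∀ z ∈ G, ∀ z' ∈ G, -pn μ (z.1 + x) - z.2 ≤ pn μ (z'.1 + x) - z'.2 := by
    intro z hz z' hz'
    have h1 := hG _ (G.sub_mem hz' hz)
    have h2 : pn μ (z' - z).1 ≤ pn μ (z'.1 + x) + pn μ (z.1 + x) := by
      have h := BanachMod.pn_add_le (μ := μ) (z'.1 + x) (-(z.1 + x))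
      rw [show (z'.1 + x) + -(z.1 + x) = (z' - z).1 by simp [sub_eq_add_neg]] at h
      have h' := pn_neg (μ := μ) (z.1 + x)
      unfold pn at h' ⊢
      rwa [h'] at h
    have h3 := h1.trans h2
    refine AEEqFun.coeFn_le.1 ?_
    filter_upwards [AEEqFun.coeFn_le.2 h3, coe_abs (z' - z).2, coe_sub z'.2 z.2,
      coe_add (pn μ (z'.1 + x)) (pn μ (z.1 + x)), coe_sub (-pn μ (z.1 + x)) z.2,
      coe_neg (pn μ (z.1 + x)), coe_sub (pn μ (z'.1 + x)) z'.2] with t e1 e2 e3 e4 e5 e6 e7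
    rw [e2, Prod.snd_sub, e3, e4] at e1
    rw [e5, e6, e7]
    linarith [le_abs_self (z'.2 t - z.2 t)]
  obtain ⟨c, hc⟩ := exists_isLUB (S := S) ⟨_, 0, G.zero_mem, rfl⟩
    ⟨pn μ ((0 : M × L0 μ).1 + x) - (0 : M × L0 μ).2, by
      rintro _ ⟨z, hz, rfl⟩; exact key z hz 0 G.zero_mem⟩
  refine ⟨c, fun z hz => ?_⟩
  have h1 : -pn μ (z.1 + x) - z.2 ≤ c := hc.1 ⟨z, hz, rfl⟩
  have h2 : c ≤ pn μ (z.1 + x) - z.2 := hc.2 (by rintro _ ⟨z', hz', rfl⟩; exact key z' hz' z hz)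
  refine AEEqFun.coeFn_le.1 ?_
  filter_upwards [AEEqFun.coeFn_le.2 h1, AEEqFun.coeFn_le.2 h2, coe_sub (-pn μ (z.1 + x)) z.2,
    coe_neg (pn μ (z.1 + x)), coe_sub (pn μ (z.1 + x)) z.2, coe_abs (z.2 + c), coe_add z.2 c]
    with t e1 e2 e3 e4 e5 e6 e7
  rw [e3, e4] at e1
  rw [e5] at e2
  rw [e6, e7, abs_le]
  constructor <;> linarith

/-- One-step extension of a dominated graph. The inequality `|y + f c| ≤ |s + f x|` follows from
the case `f = 1`, applied to `f⁻¹ • (s, y)`, on the set `{f ≠ 0}`, and from domination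
on the set `{f = 0}`. -/
theorem isDominated_sup {G : Submodule (L0 μ) (M × L0 μ)} (hG : IsDominated G) {x : M} {c : L0 μ}
    (hc : ∀ z ∈ G, |z.2 + c| ≤ pn μ (z.1 + x)) :
    IsDominated (G ⊔ Submodule.span (L0 μ) {(x, c)}) := by
  intro p hp
  obtain ⟨z, hz, q, hq, rfl⟩ := Submodule.mem_sup.1 hp
  obtain ⟨f, rfl⟩ := Submodule.mem_span_singleton.1 hq
  obtain ⟨s, y⟩ := z
  have hfe : f * (1 - f * pinv f) = 0 := by
    refine AEEqFun.ext ?_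
    filter_upwards [coe_mul f (1 - f * pinv f), coe_sub 1 (f * pinv f), coe_mul f (pinv f),
      coe_pinv f, coe_one (μ := μ), coe_zero (μ := μ)] with t e1 e2 e3 e4 e5 e6
    rw [e1, e2, e3, e4, e5, e6]
    by_cases h : f t = 0 <;> simp [h]
  have hff : f * pinv f * f = f := by
    have : f * (1 - f * pinv f) = f - f * pinv f * f := by ring
    rw [this] at hfe
    exact (sub_eq_zero.1 hfe).symm
  -- the inequality on `{f ≠ 0}`
  have h1 := hc _ (G.smul_mem (pinv f) hz)
  have h2 : |f| * pn μ ((pinv f • s) + x) = |f * pinv f| * pn μ (s + f • x) := by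
    unfold pn
    rw [← BanachMod.pn_smul, ← BanachMod.pn_smul, smul_add, smul_add, smul_smul, smul_smul, hff]
  -- the inequality on `{f = 0}`
  have h3 := hG _ (G.smul_mem (1 - f * pinv f) hz)
  have h4 : pn μ ((1 - f * pinv f) • s) = |1 - f * pinv f| * pn μ (s + f • x) := by
    unfold pn
    rw [← BanachMod.pn_smul, smul_add, smul_smul, mul_comm _ f, hfe, zero_smul, add_zero]
  change |y + f * c| ≤ pn μ (s + f • x)
  change |pinv f * y + c| ≤ pn μ (pinv f • s + x) at h1
  change |(1 - f * pinv f) * y| ≤ pn μ ((1 - f * pinv f) • s) at h3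
  rw [h4] at h3
  generalize pn μ (s + f • x) = Q at *
  generalize pn μ (pinv f • s + x) = P at *
  have h2' : ⇑(|f| * P) =ᵐ[μ] ⇑(|f * pinv f| * Q) := by rw [h2]
  refine AEEqFun.coeFn_le.1 ?_
  filter_upwards [AEEqFun.coeFn_le.2 h1, AEEqFun.coeFn_le.2 h3, h2', coe_mul |f| P, coe_abs f,
    coe_mul |f * pinv f| Q, coe_abs (f * pinv f), coe_mul f (pinv f), coe_pinv f,
    coe_abs ((1 - f * pinv f) * y), coe_mul (1 - f * pinv f) y, coe_sub 1 (f * pinv f),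
    coe_one (μ := μ), coe_mul |1 - f * pinv f| Q, coe_abs (1 - f * pinv f),
    coe_abs (pinv f * y + c), coe_add (pinv f * y) c, coe_mul (pinv f) y,
    coe_abs (y + f * c), coe_add y (f * c), coe_mul f c]
    with t a1 a2 a3 b1 b2 b3 b4 b5 b6 b7 b8 b9 b10 b11 b12 b13 b14 b15 b16 b17 b18
  rw [b13, b14, b15, b6] at a1
  rw [b7, b8, b11, b12, b9, b10, b5, b6] at a2
  rw [b1, b2, b3, b4, b5, b6] at a3
  rw [b16, b17, b18]
  by_cases h : f t = 0
  · simpa [h] using a2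
  · rw [mul_inv_cancel₀ h, abs_one, one_mul] at a3
    calc |y t + f t * c t| = |f t| * |(f t)⁻¹ * y t + c t| := by
          rw [← abs_mul]; congr 1; field_simp
      _ ≤ |f t| * P t := mul_le_mul_of_nonneg_left a1 (abs_nonneg _)
      _ = Q t := a3

/-- Hahn–Banach theorem for `L⁰(𝕏)`-modules: every `u` is normed by a functional of pointwise norm
at most `1`. -/
theorem exists_norming (u : M) :
    ∃ ω : M →ₗ[L0 μ] L0 μ, (∀ x, |ω x| ≤ pn μ x) ∧ ω u = pn μ u := by
  have h0 : IsDominated (Submodule.span (L0 μ) {((u, pn μ u) : M × L0 μ)}) := by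
    intro z hz
    obtain ⟨f, rfl⟩ := Submodule.mem_span_singleton.1 hz
    change |f * pn μ u| ≤ pn μ (f • u)
    have h : pn μ (f • u) = |f| * pn μ u := BanachMod.pn_smul f u
    have hu : 0 ≤ pn μ u := BanachMod.pn_nonneg u
    rw [h]
    refine AEEqFun.coeFn_le.1 ?_
    filter_upwards [coe_abs (f * pn μ u), coe_mul f (pn μ u), coe_mul |f| (pn μ u), coe_abs f,
      AEEqFun.coeFn_le.2 hu, coe_zero (μ := μ)] with t e1 e2 e3 e4 e5 e6
    rw [e6] at e5
    rw [e1, e2, e3, e4, abs_mul, abs_of_nonneg e5]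
  obtain ⟨G, huG, hmax⟩ := zorn_le_nonempty₀ {G : Submodule (L0 μ) (M × L0 μ) | IsDominated G}
    (by
      intro C hC hchain G₀ hG₀
      refine ⟨sSup C, ?_, fun z hz => le_sSup hz⟩
      intro z hz
      obtain ⟨G, hG, hzG⟩ := (Submodule.mem_sSup_of_directed ⟨G₀, hG₀⟩ hchain.directedOn).1 hz
      exact hC hG z hzG) _ h0
  have hG : IsDominated G := hmax.prop
  have hinj : Function.Injective ((LinearMap.fst (L0 μ) M (L0 μ)).comp G.subtype) := by
    rw [injective_iff_map_eq_zero]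
    rintro ⟨⟨x, y⟩, hz⟩ hx
    change x = 0 at hx
    subst hx
    have h1 : |y| ≤ pn μ (0 : M) := hG _ hz
    have h2 : pn μ (0 : M) = 0 := (BanachMod.pn_eq_zero (μ := μ) (0 : M)).2 rfl
    rw [h2] at h1
    have hy : y = 0 := by
      refine AEEqFun.ext ?_
      filter_upwards [AEEqFun.coeFn_le.2 h1, coe_abs y, coe_zero (μ := μ)] with t e1 e2 e3
      rw [e2, e3] at e1
      rw [e3]
      exact abs_nonpos_iff.1 e1
    simp [hy]
  have hsurj : Function.Surjective ((LinearMap.fst (L0 μ) M (L0 μ)).comp G.subtype) := by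
    intro x
    obtain ⟨c, hc⟩ := exists_value hG x
    have hle := hmax.le_of_ge (isDominated_sup hG hc) le_sup_left
    exact ⟨⟨(x, c), hle (Submodule.mem_sup_right (Submodule.mem_span_singleton_self _))⟩, rfl⟩
  let e := LinearEquiv.ofBijective _ ⟨hinj, hsurj⟩
  refine ⟨((LinearMap.snd (L0 μ) M (L0 μ)).comp G.subtype).comp e.symm.toLinearMap,
    fun x => ?_, ?_⟩
  · have h1 := hG _ (e.symm x).2
    have h2 : (e.symm x : M × L0 μ).1 = x := e.apply_symm_apply x
    rw [h2] at h1
    exact h1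
  · have h1 : e.symm u = ⟨(u, pn μ u), huG (Submodule.mem_span_singleton_self _)⟩ :=
      e.symm_apply_eq.2 rfl
    change (e.symm u : M × L0 μ).2 = pn μ u
    rw [h1]

end HahnBanach

/-! ### Bounded functionals and finitely generated submodules -/

section Dual

variable {μ : Measure X} [SFinite μ] {M : Type*} [AddCommGroup M] [Module (L0 μ) M]
  [BanachMod μ M]

variable (μ M) in
/-- The dual module `ℳ*` as a submodule of the algebraic dual. -/
def dualSubmodule : Submodule (L0 μ) (M →ₗ[L0 μ] L0 μ) where
  carrier := {ω | IsDual μ ω}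
  zero_mem' := by
    refine ⟨0, le_refl _, fun v => AEEqFun.coeFn_le.1 ?_⟩
    change ⇑|(0 : L0 μ)| ≤ᵐ[μ] ⇑(0 * pn μ v)
    rw [zero_mul]
    filter_upwards [coe_abs (0 : L0 μ), coe_zero (μ := μ)] with t e1 e2
    rw [e1, e2, abs_zero]
  add_mem' := by
    rintro ω θ ⟨g, hg, hω⟩ ⟨k, hk, hθ⟩
    refine ⟨g + k, AEEqFun.coeFn_le.1 ?_, fun v => AEEqFun.coeFn_le.1 ?_⟩
    · filter_upwards [AEEqFun.coeFn_le.2 hg, AEEqFun.coeFn_le.2 hk, coe_add g k,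
        coe_zero (μ := μ)] with t e1 e2 e3 e4
      rw [e4] at e1 e2 ⊢
      rw [e3]
      exact add_nonneg e1 e2
    · change ⇑|ω v + θ v| ≤ᵐ[μ] ⇑((g + k) * pn μ v)
      rw [add_mul]
      filter_upwards [AEEqFun.coeFn_le.2 (hω v), AEEqFun.coeFn_le.2 (hθ v), coe_abs (ω v),
        coe_abs (θ v), coe_abs (ω v + θ v), coe_add (ω v) (θ v),
        coe_add (g * pn μ v) (k * pn μ v)] with t e1 e2 e3 e4 e5 e6 e7
      rw [e3] at e1
      rw [e4] at e2
      rw [e5, e6, e7]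
      exact (abs_add_le _ _).trans (add_le_add e1 e2)
  smul_mem' := by
    rintro f ω ⟨g, hg, hω⟩
    refine ⟨|f| * g, AEEqFun.coeFn_le.1 ?_, fun v => AEEqFun.coeFn_le.1 ?_⟩
    · filter_upwards [AEEqFun.coeFn_le.2 hg, coe_mul |f| g, coe_abs f,
        coe_zero (μ := μ)] with t e1 e2 e3 e4
      rw [e4] at e1 ⊢
      rw [e2, e3]
      exact mul_nonneg (abs_nonneg _) e1
    · change ⇑|f * ω v| ≤ᵐ[μ] ⇑(|f| * g * pn μ v)
      rw [mul_assoc]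
      filter_upwards [AEEqFun.coeFn_le.2 (hω v), coe_abs (ω v), coe_abs (f * ω v),
        coe_mul f (ω v), coe_mul |f| (g * pn μ v), coe_abs f] with t e1 e2 e3 e4 e5 e6
      rw [e2] at e1
      rw [e3, e4, e5, e6, abs_mul]
      exact mul_le_mul_of_nonneg_left e1 (abs_nonneg _)

/-- Rescaling a norming functional of `u` by `|u|⁻¹` gives `ω u = 1` on the set `{u ≠ 0}`. -/
theorem exists_dual_smul_self (u : M) : ∃ ω ∈ dualSubmodule μ M, ω u • u = u := by
  obtain ⟨ω, hω, hu⟩ := exists_norming (μ := μ) u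
  have hω' : ω ∈ dualSubmodule μ M := by
    refine ⟨1, AEEqFun.coeFn_le.1 ?_, fun v => ?_⟩
    · filter_upwards [coe_zero (μ := μ), coe_one (μ := μ)] with t e1 e2
      rw [e1, e2]
      exact zero_le_one
    · rw [one_mul]
      exact hω v
  refine ⟨pinv (pn μ u) • ω, Submodule.smul_mem _ _ hω', ?_⟩
  change (pinv (pn μ u) * ω u) • u = u
  rw [hu, ← sub_eq_zero, ← BanachMod.pn_eq_zero (μ := μ)]
  have h : (pinv (pn μ u) * pn μ u) • u - u = (pinv (pn μ u) * pn μ u - 1) • u := by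
    rw [sub_smul, one_smul]
  rw [h, BanachMod.pn_smul]
  change |pinv (pn μ u) * pn μ u - 1| * pn μ u = 0
  generalize pn μ u = p
  refine AEEqFun.ext ?_
  filter_upwards [coe_mul |pinv p * p - 1| p, coe_abs (pinv p * p - 1), coe_sub (pinv p * p) 1,
    coe_mul (pinv p) p, coe_pinv p, coe_one (μ := μ), coe_zero (μ := μ)]
    with t e1 e2 e3 e4 e5 e6 e7
  rw [e1, e2, e3, e4, e5, e6, e7]
  by_cases h : p t = 0 <;> simp [h]

/-- Every finitely generated submodule is the image of a bounded projection: writing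
`P x = ∑ j, η j x • w j`, the map `P` fixes each `w i`. If `P` is such a projection for
`w 1, …, w n`, set `u = w 0 - P (w 0)`, choose `ω` with `ω u • u = u`, and
replace `P` by `P + (ω ∘ (1 - P)) • u`. -/
theorem exists_dual_family (n : ℕ) (w : Fin n → M) :
    ∃ η : Fin n → (M →ₗ[L0 μ] L0 μ), (∀ j, η j ∈ dualSubmodule μ M) ∧
      ∀ i, ∑ j, η j (w i) • w j = w i := by
  induction n with
  | zero => exact ⟨fun _ => 0, fun j => j.elim0, fun i => i.elim0⟩
  | succ n ih =>
    obtain ⟨η, hη, hw⟩ := ih fun i => w i.succ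
    obtain ⟨u, hu⟩ : ∃ u, u = w 0 - ∑ j, η j (w 0) • w j.succ := ⟨_, rfl⟩
    obtain ⟨ω, hω, hωu⟩ := exists_dual_smul_self (μ := μ) u
    obtain ⟨θ, hθ⟩ : ∃ θ, θ = ω - ∑ j, ω (w j.succ) • η j := ⟨_, rfl⟩
    have hθmem : θ ∈ dualSubmodule μ M := by
      rw [hθ]
      exact Submodule.sub_mem _ hω
        (Submodule.sum_mem _ fun j _ => Submodule.smul_mem _ _ (hη j))
    have hθx : ∀ x, θ x = ω (x - ∑ j, η j x • w j.succ) := by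
      intro x
      simp only [hθ, LinearMap.sub_apply, LinearMap.sum_apply, LinearMap.smul_apply, map_sub,
        map_sum, map_smul, smul_eq_mul, mul_comm]
    have hsum : ∀ x, θ x • w 0 + ∑ j, (η j - η j (w 0) • θ) x • w j.succ =
        ∑ j, η j x • w j.succ + θ x • u := by
      intro x
      simp only [LinearMap.sub_apply, LinearMap.smul_apply, smul_eq_mul, sub_smul,
        Finset.sum_sub_distrib, hu, smul_sub, Finset.smul_sum, smul_smul,
        mul_comm (θ x)]
      abel
    refine ⟨Fin.cons θ fun j => η j - η j (w 0) • θ, fun j => ?_, fun i => ?_⟩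
    · refine Fin.cases hθmem (fun j => ?_) j
      exact Submodule.sub_mem _ (hη j) (Submodule.smul_mem _ _ hθmem)
    · rw [Fin.sum_univ_succ]
      simp only [Fin.cons_zero, Fin.cons_succ]
      rw [hsum]
      refine Fin.cases ?_ (fun i => ?_) i
      · rw [hθx, ← hu, hωu, hu]
        abel
      · rw [hθx, hw, sub_self, map_zero, zero_smul, add_zero]

end Dual

/-- null tensors in Banach `L⁰`-modules. Let `𝕏` be a σ-finite measure
space and `ℳ`, `𝒩` Banach `L⁰(𝕏)`-modules. A tensor `α = ∑_{i=1}^n v_i ⊗ w_i ∈ ℳ ⊗ 𝒩`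
is zero if and only if `∑_{i=1}^n ω(v_i) η(w_i) = 0` in `L⁰(𝕏)` for every `ω ∈ ℳ*` and
`η ∈ 𝒩*`. -/
theorem null_tensor_criterion
    (μ : Measure X) [SigmaFinite μ]
    (M : Type*) [AddCommGroup M] [Module (L0 μ) M] [BanachMod μ M]
    (N : Type*) [AddCommGroup N] [Module (L0 μ) N] [BanachMod μ N]
    (n : ℕ) (v : Fin n → M) (w : Fin n → N) :
    (∑ i, v i ⊗ₜ[L0 μ] w i) = 0 ↔
      ∀ (ω : M →ₗ[L0 μ] L0 μ) (η : N →ₗ[L0 μ] L0 μ), IsDual μ ω → IsDual μ η →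
        (∑ i, ω (v i) * η (w i)) = 0 := by
  constructor
  · intro h ω η _ _
    have := congrArg (LinearMap.mul' (L0 μ) (L0 μ) ∘ₗ TensorProduct.map ω η) h
    simpa using this
  · intro h
    obtain ⟨η, hη, hw⟩ := exists_dual_family (μ := μ) n w
    have hv : ∀ j, ∑ i, η j (w i) • v i = 0 := by
      intro j
      obtain ⟨ω, hω, hωu⟩ := exists_dual_smul_self (μ := μ) (∑ i, η j (w i) • v i)
      have h0 : ω (∑ i, η j (w i) • v i) = 0 := by
        rw [← h ω (η j) hω (hη j), map_sum]
        exact Finset.sum_congr rfl fun i _ => by rw [map_smul, smul_eq_mul, mul_comm]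
      rw [← hωu, h0, zero_smul]
    calc ∑ i, v i ⊗ₜ[L0 μ] w i = ∑ i, ∑ j, (η j (w i) • v i) ⊗ₜ[L0 μ] w j := by
          refine Finset.sum_congr rfl fun i _ => ?_
          conv_lhs => rw [← hw i]
          rw [TensorProduct.tmul_sum]
          exact Finset.sum_congr rfl fun j _ => by
            rw [TensorProduct.tmul_smul, TensorProduct.smul_tmul']
      _ = ∑ j, (∑ i, η j (w i) • v i) ⊗ₜ[L0 μ] w j := by
          rw [Finset.sum_comm]
          exact Finset.sum_congr rfl fun j _ => by rw [TensorProduct.sum_tmul]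
      _ = 0 := by simp [hv]

end Paper
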